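/- arXiv:2206.10688 — 3 statements merged into one kernel-verified Lean document; each statement's English description precedes it below -/
import Mathlib

section
/- Let a, b ∈ ℂ \ {0} and γ ∈ ℂ with Re(γ) a positive integer, and assume h_{a,b}^γ is not of the form ω ↦ d·ω^γ for any d ∈ ℂ (i.e., Im(γ) ≠ 0 or b ≠ (−1)^{Re(γ)} a). Let φ : ℝ → ℂ be a Schwartz function. Then there exists a constant c > 0 (depending on a, b, γ, φ) such that |(D_{a,b}^γ φ)(x)| ≤ c·(1 + log(1+|x|)) / (1 + |x|^{Re(γ)+1}) for all x ∈ ℝ, and consequently ∫_ℝ |(D_{a,b}^γ φ)(x)|^p dx < ∞ for every real p > 1/(Re(γ)+1). -/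
/-!
Splitting frequencies by sign, `D_{a,b}^γ φ (x)` is a combination of two half-line integrals
`∫_0^∞ g(ω) ω^γ e^{± iωx} dω` with `g` Schwartz (the transform of `φ`, or its reflection), so it
suffices to bound such an integral by `(1 + log |x|) / |x|^(m + 1)` for `|x| ≥ 1`, where
`m = Re γ`; for `|x| ≤ 1` it is at most `∫ |ω|^m |g|`.

Since `(g ω^γ)' = (ω g' + γ g) ω^(γ - 1)` and `ω g' + γ g` is again Schwartz, an integration by
parts (`integral_osc_by_parts`) lowers `Re γ` by one and gains a factor `|x|⁻¹`, without boundary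
terms while `Re γ > 0`. This reduces `exists_decay` to `Re γ = 0` (`exists_decay_zero`). There the
integral is cut at `ω = 1/|x|`: the low part is `O(1/|x|)`, and one more integration by parts on
the high part leaves `|x|⁻¹ ∫_{1/|x|}^∞ |ω g' + γ g| / ω`, whose size is `|x|⁻¹ (1 + log |x|)`.

For the `p`-integrability, the logarithm is absorbed in a small power of `1 + |x|`
(`lintegral_rpow_lt_top`).
-/

open MeasureTheory Complex

/-- The homogeneous Fourier multiplier `h_{a,b}^γ`. -/
noncomputable def hab (a b γ : ℂ) (ω : ℝ) : ℂ :=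
  if 0 < ω then a * (ω : ℂ) ^ γ
  else if ω < 0 then b * ((-ω : ℝ) : ℂ) ^ γ
  else 0

/-- The Fourier transform `φ̂(ω) = ∫ φ(x) e^{-iωx} dx`. -/
noncomputable def FT (φ : ℝ → ℂ) (ω : ℝ) : ℂ :=
  ∫ x : ℝ, φ x * Complex.exp (-(Complex.I * (ω : ℂ) * (x : ℂ)))

/-- The complex-order derivative `D_{a,b}^γ`. -/
noncomputable def Dop (a b γ : ℂ) (φ : ℝ → ℂ) (x : ℝ) : ℂ :=
  (1 / (2 * (Real.pi : ℂ))) *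
    ∫ ω : ℝ, FT φ ω * hab a b γ ω * Complex.exp (Complex.I * (ω : ℂ) * (x : ℂ))

/-- The complex-order integration operator `I_{a,b}^{γ;k}`. -/
noncomputable def Iop (a b γ : ℂ) (k : ℕ) (φ : ℝ → ℂ) (x : ℝ) : ℂ :=
  (1 / (2 * (Real.pi : ℂ))) *
    ∫ ω : ℝ, FT φ ω *
      ((Complex.exp (Complex.I * (ω : ℂ) * (x : ℂ)) -
        ∑ j ∈ Finset.range k, (Complex.I * (x : ℂ)) ^ j * (ω : ℂ) ^ j / (j.factorial : ℂ)) /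
        hab a b γ ω)

/-- The adjoint integration operator `I_{a,b}^{(γ;k)*}`. -/
noncomputable def Istar (a b γ : ℂ) (k : ℕ) (φ : ℝ → ℂ) (x : ℝ) : ℂ :=
  (1 / (2 * (Real.pi : ℂ))) *
    ∫ ω : ℝ,
      (FT φ ω - ∑ j ∈ Finset.range k, iteratedDeriv j (FT φ) 0 * (ω : ℂ) ^ j / (j.factorial : ℂ)) /
        hab a b γ (-ω) * Complex.exp (Complex.I * (ω : ℂ) * (x : ℂ))

/-! ### Half-line integrands and integration by parts -/

/-- The one-sided oscillatory integrand `g(ω) ω^γ e^{iωx}`, meant for `ω > 0`. -/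
noncomputable def osc (g : ℝ → ℂ) (γ : ℂ) (x ω : ℝ) : ℂ :=
  g ω * (ω : ℂ) ^ γ * Complex.exp (Complex.I * (ω : ℂ) * (x : ℂ))

/-- The operator `g ↦ ω g' + γ g` on Schwartz functions. It is characterised by
`(g ω^γ)' = (E g) ω^(γ - 1)` on the half-line, so a derivative costs one power of `ω`
and stays within the same family of integrands. -/
noncomputable def eulerOp (γ : ℂ) (g : SchwartzMap ℝ ℂ) : SchwartzMap ℝ ℂ :=
  SchwartzMap.smulLeftCLM ℂ (fun ω : ℝ => (ω : ℂ)) (SchwartzMap.derivCLM ℂ ℂ g) + γ • g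

lemma eulerOp_apply (γ : ℂ) (g : SchwartzMap ℝ ℂ) (ω : ℝ) :
    eulerOp γ g ω = ω * deriv g ω + γ * g ω := by
  have h : Function.HasTemperateGrowth (fun ω : ℝ => (ω : ℂ)) := by fun_prop
  simp [eulerOp, SchwartzMap.smulLeftCLM_apply_apply h]

lemma norm_exp_I_mul_mul (ω x : ℝ) :
    ‖Complex.exp (Complex.I * (ω : ℂ) * (x : ℂ))‖ = 1 := by
  rw [mul_assoc, ← Complex.ofReal_mul, Complex.norm_exp_I_mul_ofReal]

lemma norm_osc (g : ℝ → ℂ) (γ : ℂ) (x : ℝ) {ω : ℝ} (hω : 0 < ω) :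
    ‖osc g γ x ω‖ = ‖g ω‖ * ω ^ γ.re := by
  rw [osc, norm_mul, norm_mul, norm_exp_I_mul_mul, mul_one,
    Complex.norm_cpow_eq_rpow_re_of_pos hω]

lemma norm_osc_nat (g : ℝ → ℂ) {γ : ℂ} {n : ℕ} (hγ : γ.re = n) (x : ℝ) {ω : ℝ} (hω : 0 < ω) :
    ‖osc g γ x ω‖ = ω ^ n * ‖g ω‖ := by
  rw [norm_osc g γ x hω, hγ, Real.rpow_natCast, mul_comm]

lemma hasDerivAt_osc_amplitude (g : SchwartzMap ℝ ℂ) (γ : ℂ) {ω : ℝ} (hω : 0 < ω) :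
    HasDerivAt (fun t : ℝ => g t * (t : ℂ) ^ γ) (eulerOp γ g ω * (ω : ℂ) ^ (γ - 1)) ω := by
  have h1 : HasDerivAt (fun t : ℝ => (t : ℂ) ^ γ) (γ * (ω : ℂ) ^ (γ - 1)) ω := by
    by_cases h : γ = 0
    · subst h
      simpa using hasDerivAt_const ω (1 : ℂ)
    · exact hasDerivAt_ofReal_cpow_const hω.ne' h
  have hne : (ω : ℂ) ≠ 0 := by exact_mod_cast hω.ne'
  have h2 : (ω : ℂ) ^ γ = ω * (ω : ℂ) ^ (γ - 1) := by
    rw [Complex.cpow_sub _ _ hne, Complex.cpow_one]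
    field_simp
  refine ((g.hasDerivAt ω).mul h1).congr_deriv ?_
  rw [eulerOp_apply, h2]
  ring

lemma continuousOn_osc (g : SchwartzMap ℝ ℂ) (γ : ℂ) (x : ℝ) :
    ContinuousOn (osc g γ x) (Set.Ioi 0) := by
  intro ω hω
  have h1 := (hasDerivAt_osc_amplitude g γ hω).continuousAt
  have h2 : ContinuousAt (fun ω : ℝ => Complex.exp (Complex.I * (ω : ℂ) * (x : ℂ))) ω := by
    fun_prop
  exact (h1.mul h2).continuousWithinAt

lemma integrableOn_osc_of_le (g : SchwartzMap ℝ ℂ) (γ : ℂ) (x : ℝ) {δ K : ℝ} (hδ : 0 ≤ δ) (n : ℕ)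
    (hle : ∀ ω, δ < ω → ω ^ γ.re ≤ K * ω ^ n) : IntegrableOn (osc g γ x) (Set.Ioi δ) := by
  refine Integrable.mono' (g := fun ω => K * (‖ω‖ ^ n * ‖g ω‖))
    ((g.integrable_pow_mul volume n).const_mul K).integrableOn
    (((continuousOn_osc g γ x).mono (Set.Ioi_subset_Ioi hδ)).aestronglyMeasurable
      measurableSet_Ioi) ?_
  filter_upwards [ae_restrict_mem measurableSet_Ioi] with ω hω
  have hω : δ < ω := hω
  have hpos : 0 < ω := hδ.trans_lt hω
  rw [norm_osc _ _ _ hpos, Real.norm_of_nonneg hpos.le]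
  nlinarith [mul_le_mul_of_nonneg_left (hle ω hω) (norm_nonneg (g ω))]

lemma integrableOn_osc_nat (g : SchwartzMap ℝ ℂ) {γ : ℂ} {n : ℕ} (hγ : γ.re = n) (x : ℝ)
    {δ : ℝ} (hδ : 0 ≤ δ) : IntegrableOn (osc g γ x) (Set.Ioi δ) :=
  integrableOn_osc_of_le g γ x hδ (K := 1) n fun ω _ => by
    rw [hγ, Real.rpow_natCast, one_mul]

lemma tendsto_osc_atTop (g : SchwartzMap ℝ ℂ) {γ : ℂ} {n : ℕ} (hγ : γ.re = n) (x : ℝ) :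
    Filter.Tendsto (osc g γ x) Filter.atTop (nhds 0) := by
  obtain ⟨C, -, hC⟩ := g.decay (n + 1) 0
  refine squeeze_zero_norm' (a := fun ω : ℝ => C / ω) ?_
    (Filter.Tendsto.div_atTop tendsto_const_nhds Filter.tendsto_id)
  filter_upwards [Filter.eventually_gt_atTop 0] with ω hω
  have h := hC ω
  rw [norm_iteratedFDeriv_zero, Real.norm_of_nonneg hω.le] at h
  rw [norm_osc_nat g hγ x hω, le_div_iff₀ hω]
  calc ω ^ n * ‖g ω‖ * ω = ω ^ (n + 1) * ‖g ω‖ := by ring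
    _ ≤ C := h

/-- One integration by parts on `(δ, ∞)`; `L` is the boundary value at `δ`. The case `δ = 0`
drives the induction on `Re γ`, the case `δ > 0` handles `Re γ = 0`. -/
lemma integral_osc_by_parts (g : SchwartzMap ℝ ℂ) {γ : ℂ} {n : ℕ} (hγ : γ.re = n) {x : ℝ}
    (hx : x ≠ 0) {δ : ℝ} (hδ : 0 ≤ δ) {L : ℂ}
    (hL : Filter.Tendsto (osc g γ x) (nhdsWithin δ (Set.Ioi δ)) (nhds L))
    (hint : IntegrableOn (osc (eulerOp γ g) (γ - 1) x) (Set.Ioi δ)) :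
    ∫ ω in Set.Ioi δ, osc g γ x ω =
      (Complex.I * x)⁻¹ * (-L - ∫ ω in Set.Ioi δ, osc (eulerOp γ g) (γ - 1) x ω) := by
  have hxc : (x : ℂ) ≠ 0 := by exact_mod_cast hx
  have hc : Complex.I * (x : ℂ) ≠ 0 := mul_ne_zero Complex.I_ne_zero hxc
  set e : ℝ → ℂ := fun ω => Complex.exp (Complex.I * (ω : ℂ) * (x : ℂ)) with he
  have hv : ∀ ω ∈ Set.Ioi δ, HasDerivAt (fun ω => (Complex.I * x)⁻¹ * e ω) (e ω) ω := by
    intro ω _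
    have h1 : HasDerivAt (fun ω : ℝ => Complex.I * (ω : ℂ) * (x : ℂ)) (Complex.I * 1 * x) ω :=
      ((HasDerivAt.ofReal_comp (hasDerivAt_id ω)).const_mul Complex.I).mul_const (x : ℂ)
    refine (h1.cexp.const_mul (Complex.I * (x : ℂ))⁻¹).congr_deriv ?_
    simp only [he]
    field_simp
  have hu1 : (fun ω : ℝ => g ω * (ω : ℂ) ^ γ) * (fun ω => (Complex.I * x)⁻¹ * e ω) =
      fun ω => (Complex.I * x)⁻¹ * osc g γ x ω := by
    funext ω
    simp only [Pi.mul_apply, osc, he]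
    ring
  have hu2 : (fun ω : ℝ => eulerOp γ g ω * (ω : ℂ) ^ (γ - 1)) *
      (fun ω => (Complex.I * x)⁻¹ * e ω) =
      fun ω => (Complex.I * x)⁻¹ * osc (eulerOp γ g) (γ - 1) x ω := by
    funext ω
    simp only [Pi.mul_apply, osc, he]
    ring
  have key := integral_Ioi_mul_deriv_eq_deriv_mul (a := δ)
    (a' := (Complex.I * x)⁻¹ * L) (b' := (Complex.I * x)⁻¹ * 0)
    (fun ω hω => hasDerivAt_osc_amplitude g γ (hδ.trans_lt hω)) hv
    (integrableOn_osc_nat g hγ x hδ)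
    (by rw [hu2]; exact hint.const_mul _)
    (by rw [hu1]; exact hL.const_mul _)
    (by rw [hu1]; exact (tendsto_osc_atTop g hγ x).const_mul _)
  have h3 : ∫ ω in Set.Ioi δ, (fun ω : ℝ => eulerOp γ g ω * (ω : ℂ) ^ (γ - 1)) ω *
      ((Complex.I * x)⁻¹ * e ω) =
      (Complex.I * x)⁻¹ * ∫ ω in Set.Ioi δ, osc (eulerOp γ g) (γ - 1) x ω := by
    rw [← integral_const_mul]
    exact integral_congr_ae (Filter.Eventually.of_forall fun ω => congrFun hu2 ω)
  calc ∫ ω in Set.Ioi δ, osc g γ x ω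
      = ∫ ω in Set.Ioi δ, (fun ω : ℝ => g ω * (ω : ℂ) ^ γ) ω * e ω := rfl
    _ = _ := by rw [key, h3]; ring

/-! ### Decay of half-line oscillatory integrals -/

lemma exists_schwartz_bound (g : SchwartzMap ℝ ℂ) : ∃ C, 0 < C ∧ ∀ ω, ‖g ω‖ ≤ C := by
  obtain ⟨C, hC, h⟩ := g.decay 0 0
  exact ⟨C, hC, fun ω => by simpa using h ω⟩

/-- The source of the logarithm: the scale-invariant integrand `F(ω)/ω`, cut off at `δ`. -/
lemma norm_integral_osc_neg_one_le (F : SchwartzMap ℝ ℂ) {γ : ℂ} (hγ : γ.re = -1) {C : ℝ}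
    (hC : ∀ ω, ‖F ω‖ ≤ C) {δ : ℝ} (hδ : 0 < δ) (hδ1 : δ ≤ 1) (x : ℝ) :
    IntegrableOn (osc F γ x) (Set.Ioi δ) ∧
    ‖∫ ω in Set.Ioi δ, osc F γ x ω‖ ≤ C * Real.log (1 / δ) + ∫ ω, ‖F ω‖ := by
  have hint : IntegrableOn (osc F γ x) (Set.Ioi δ) := by
    refine integrableOn_osc_of_le F γ x hδ.le (K := δ⁻¹) 0 fun ω hω => ?_
    rw [hγ, Real.rpow_neg_one, pow_zero, mul_one]
    gcongr
  refine ⟨hint, ?_⟩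
  have hnorm : ∀ ω, 0 < ω → ‖osc F γ x ω‖ = ‖F ω‖ * ω⁻¹ := fun ω hω => by
    rw [norm_osc F γ x hω, hγ, Real.rpow_neg_one]
  have h1 : ‖∫ ω in Set.Ioc δ 1, osc F γ x ω‖ ≤ C * Real.log (1 / δ) := by
    have hii : IntervalIntegrable (fun ω : ℝ => C * ω⁻¹) volume δ 1 := by
      refine ContinuousOn.intervalIntegrable ?_
      rw [Set.uIcc_of_le hδ1]
      exact continuousOn_const.mul
        (continuousOn_id.inv₀ fun ω hω => (hδ.trans_le hω.1).ne')
    rw [← integral_inv_of_pos hδ one_pos, ← intervalIntegral.integral_const_mul,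
      ← intervalIntegral.integral_of_le hδ1]
    refine intervalIntegral.norm_integral_le_of_norm_le hδ1 ?_ hii
    refine Filter.Eventually.of_forall fun ω hω => ?_
    have hpos := hδ.trans hω.1
    rw [hnorm ω hpos]
    exact mul_le_mul_of_nonneg_right (hC ω) (inv_nonneg.2 hpos.le)
  have h2 : ‖∫ ω in Set.Ioi 1, osc F γ x ω‖ ≤ ∫ ω, ‖F ω‖ := by
    calc ‖∫ ω in Set.Ioi 1, osc F γ x ω‖ ≤ ∫ ω in Set.Ioi 1, ‖F ω‖ := by
          refine norm_integral_le_of_norm_le F.integrable.norm.integrableOn ?_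
          filter_upwards [ae_restrict_mem measurableSet_Ioi] with ω hω
          have hω : 1 < ω := hω
          rw [hnorm ω (one_pos.trans hω)]
          exact mul_le_of_le_one_right (norm_nonneg _) (inv_le_one_of_one_le₀ hω.le)
      _ ≤ ∫ ω, ‖F ω‖ :=
          setIntegral_le_integral F.integrable.norm
            (Filter.Eventually.of_forall fun ω => norm_nonneg _)
  rw [← Set.Ioc_union_Ioi_eq_Ioi hδ1, setIntegral_union Set.Ioc_disjoint_Ioi_same
    measurableSet_Ioi (hint.mono_set Set.Ioc_subset_Ioi_self)
    (hint.mono_set (Set.Ioi_subset_Ioi hδ1))]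
  exact (norm_add_le _ _).trans (add_le_add h1 h2)

lemma exists_decay_zero (γ : ℂ) (hγ : γ.re = 0) (g : SchwartzMap ℝ ℂ) :
    ∃ C, 0 ≤ C ∧ ∀ x : ℝ, 1 ≤ |x| →
      ‖∫ ω in Set.Ioi 0, osc g γ x ω‖ ≤ C * (1 + Real.log |x|) / |x| := by
  obtain ⟨A, hA, hgA⟩ := exists_schwartz_bound g
  obtain ⟨B, hB, hEB⟩ := exists_schwartz_bound (eulerOp γ g)
  set N := ∫ ω, ‖eulerOp γ g ω‖ with hN
  have hN0 : 0 ≤ N := integral_nonneg fun ω => norm_nonneg _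
  have hγ' : γ.re = ((0 : ℕ) : ℝ) := by simpa using hγ
  refine ⟨2 * A + B + N, by positivity, fun x hx => ?_⟩
  have hx0 : 0 < |x| := one_pos.trans_le hx
  -- for `ω` below `1/|x|` the factor `e^{iωx}` has not yet begun to oscillate
  set δ := |x|⁻¹ with hδdef
  have hδ : 0 < δ := inv_pos.2 hx0
  have hδ1 : δ ≤ 1 := inv_le_one_of_one_le₀ hx
  have hlog : 0 ≤ Real.log |x| := Real.log_nonneg hx
  have hsmall : ‖∫ ω in Set.Ioc 0 δ, osc g γ x ω‖ ≤ A * δ := by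
    have := norm_setIntegral_le_of_norm_le_const (μ := volume) (s := Set.Ioc 0 δ)
      (f := osc g γ x) (C := A) (by simp) (fun ω hω => by
        rw [norm_osc_nat g hγ' x hω.1, pow_zero, one_mul]; exact hgA ω)
    simpa [measureReal_def, hδ.le] using this
  obtain ⟨hint, hbd⟩ := norm_integral_osc_neg_one_le (eulerOp γ g) (γ := γ - 1)
    (by simp [hγ]) hEB hδ hδ1 x
  have hcont : Filter.Tendsto (osc g γ x) (nhdsWithin δ (Set.Ioi δ)) (nhds (osc g γ x δ)) :=
    (((continuousOn_osc g γ x).continuousAt (Ioi_mem_nhds hδ)).tendsto).mono_left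
      nhdsWithin_le_nhds
  have hlarge : ‖∫ ω in Set.Ioi δ, osc g γ x ω‖ ≤ δ * (A + (B * Real.log |x| + N)) := by
    rw [integral_osc_by_parts g hγ' (abs_pos.1 hx0) hδ.le hcont hint, norm_mul, norm_inv,
      norm_mul, Complex.norm_I, one_mul, Complex.norm_real, Real.norm_eq_abs]
    refine mul_le_mul_of_nonneg_left ((norm_sub_le _ _).trans (add_le_add ?_ ?_)) hδ.le
    · rw [norm_neg, norm_osc_nat g hγ' x hδ, pow_zero, one_mul]
      exact hgA δ
    · simpa [hδdef] using hbd
  have hI := integrableOn_osc_nat g hγ' x le_rfl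
  rw [← Set.Ioc_union_Ioi_eq_Ioi hδ.le, setIntegral_union Set.Ioc_disjoint_Ioi_same
    measurableSet_Ioi (hI.mono_set Set.Ioc_subset_Ioi_self)
    (hI.mono_set (Set.Ioi_subset_Ioi hδ.le))]
  refine (norm_add_le _ _).trans ((add_le_add hsmall hlarge).trans ?_)
  rw [div_eq_mul_inv, ← hδdef]
  have : A + (A + (B * Real.log |x| + N)) ≤ (2 * A + B + N) * (1 + Real.log |x|) := by
    nlinarith [mul_nonneg hA.le hlog, mul_nonneg hN0 hlog]
  nlinarith [mul_le_mul_of_nonneg_right this hδ.le]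

/-- Decay of the half-line integral. For `Re γ = n + 1` the boundary term at `0` vanishes, so an
integration by parts gains a factor `|x|⁻¹` and lowers `Re γ` by one. -/
lemma exists_decay (n : ℕ) : ∀ (γ : ℂ), γ.re = n → ∀ g : SchwartzMap ℝ ℂ,
    ∃ C, 0 ≤ C ∧ ∀ x : ℝ, 1 ≤ |x| →
      ‖∫ ω in Set.Ioi 0, osc g γ x ω‖ ≤ C * (1 + Real.log |x|) / |x| ^ (n + 1) := by
  induction n with
  | zero =>
    intro γ hγ g
    simpa using exists_decay_zero γ (by simpa using hγ) g
  | succ n ih =>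
    intro γ hγ g
    have hγ1 : (γ - 1).re = n := by simp [hγ]
    obtain ⟨C, hC, h⟩ := ih (γ - 1) hγ1 (eulerOp γ g)
    refine ⟨C, hC, fun x hx => ?_⟩
    have hx0 : 0 < |x| := one_pos.trans_le hx
    have hL : Filter.Tendsto (osc g γ x) (nhdsWithin 0 (Set.Ioi 0)) (nhds 0) := by
      refine squeeze_zero_norm' (a := fun ω : ℝ => ω ^ (n + 1) * ‖g ω‖) ?_ ?_
      · filter_upwards [self_mem_nhdsWithin] with ω hω
        exact (norm_osc_nat g hγ x hω).le
      · have hc : Continuous fun ω : ℝ => ω ^ (n + 1) * ‖g ω‖ :=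
          (continuous_pow _).mul g.continuous.norm
        have := hc.tendsto 0
        simp only [zero_pow (Nat.succ_ne_zero n), zero_mul] at this
        exact this.mono_left nhdsWithin_le_nhds
    rw [integral_osc_by_parts g hγ (abs_pos.1 hx0) le_rfl hL
      (integrableOn_osc_nat _ hγ1 x le_rfl), neg_zero, zero_sub, norm_mul, norm_neg, norm_inv,
      norm_mul, Complex.norm_I, one_mul, Complex.norm_real, Real.norm_eq_abs]
    calc |x|⁻¹ * ‖∫ ω in Set.Ioi 0, osc (eulerOp γ g) (γ - 1) x ω‖
        ≤ |x|⁻¹ * (C * (1 + Real.log |x|) / |x| ^ (n + 1)) :=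
          mul_le_mul_of_nonneg_left (h x hx) (inv_nonneg.2 hx0.le)
      _ = C * (1 + Real.log |x|) / |x| ^ (n + 1 + 1) := by
          field_simp
          ring

lemma exists_decay_global (n : ℕ) (γ : ℂ) (hγ : γ.re = n) (g : SchwartzMap ℝ ℂ) :
    ∃ C, 0 ≤ C ∧ ∀ x : ℝ,
      ‖∫ ω in Set.Ioi 0, osc g γ x ω‖ ≤
        C * (1 + Real.log (1 + |x|)) / (1 + |x| ^ (n + 1)) := by
  obtain ⟨C, hC, h⟩ := exists_decay n γ hγ g
  set M := ∫ ω, ‖ω‖ ^ n * ‖g ω‖ with hM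
  have hM0 : 0 ≤ M := integral_nonneg fun ω => by positivity
  refine ⟨2 * (C + M), by positivity, fun x => ?_⟩
  have hl : 0 ≤ Real.log (1 + |x|) := Real.log_nonneg (by linarith [abs_nonneg x])
  rw [le_div_iff₀ (by positivity)]
  rcases le_total 1 |x| with hx | hx
  · have hx0 : 0 < |x| := one_pos.trans_le hx
    have h1 := h x hx
    rw [le_div_iff₀ (by positivity)] at h1
    have hll : Real.log |x| ≤ Real.log (1 + |x|) := Real.log_le_log hx0 (by linarith)
    have hp : 1 ≤ |x| ^ (n + 1) := one_le_pow₀ hx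
    set J := ‖∫ ω in Set.Ioi 0, osc g γ x ω‖
    have hJ : 0 ≤ J := norm_nonneg _
    calc J * (1 + |x| ^ (n + 1)) ≤ 2 * (J * |x| ^ (n + 1)) := by nlinarith
      _ ≤ 2 * (C * (1 + Real.log |x|)) := by linarith
      _ ≤ 2 * (C * (1 + Real.log (1 + |x|))) := by gcongr
      _ ≤ 2 * (C + M) * (1 + Real.log (1 + |x|)) := by nlinarith [mul_nonneg hM0 hl]
  · have hb : ‖∫ ω in Set.Ioi 0, osc g γ x ω‖ ≤ M := by
      have hi := g.integrable_pow_mul volume n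
      calc ‖∫ ω in Set.Ioi 0, osc g γ x ω‖ ≤ ∫ ω in Set.Ioi 0, ‖ω‖ ^ n * ‖g ω‖ := by
            refine norm_integral_le_of_norm_le hi.integrableOn ?_
            filter_upwards [ae_restrict_mem measurableSet_Ioi] with ω hω
            have hω : 0 < ω := hω
            rw [norm_osc_nat g hγ x hω, Real.norm_of_nonneg hω.le]
        _ ≤ M := setIntegral_le_integral hi
            (Filter.Eventually.of_forall fun ω => by positivity)
    have hp : |x| ^ (n + 1) ≤ 1 := pow_le_one₀ (abs_nonneg x) hx
    calc _ ≤ M * (1 + 1) := by gcongr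
      _ ≤ 2 * (C + M) * (1 + Real.log (1 + |x|)) := by
          nlinarith [mul_nonneg hM0 hl, mul_nonneg hC hl]

/-! ### Splitting the spectral integral by the sign of the frequency -/

/-- The transform `FT φ`, precomposed with a nonzero dilation, is a Schwartz function. -/
lemma exists_schwartz_FT (φ : SchwartzMap ℝ ℂ) {s : ℝ} (hs : s ≠ 0) :
    ∃ g : SchwartzMap ℝ ℂ, ∀ ω, g ω = FT φ (s * ω) := by
  have hc : s * (2 * Real.pi)⁻¹ ≠ 0 := mul_ne_zero hs (by positivity)
  refine ⟨SchwartzMap.compCLMOfContinuousLinearEquiv ℂ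
    (ContinuousLinearEquiv.unitsEquivAut ℝ (Units.mk0 _ hc)) (FourierTransform.fourier φ),
    fun ω => ?_⟩
  rw [SchwartzMap.compCLMOfContinuousLinearEquiv_apply, Function.comp_apply,
    SchwartzMap.fourier_coe, Real.fourier_real_eq_integral_exp_smul, FT]
  refine integral_congr_ae (Filter.Eventually.of_forall fun v => ?_)
  have hpi : (Real.pi : ℂ) ≠ 0 := by exact_mod_cast Real.pi_ne_zero
  simp only [ContinuousLinearEquiv.unitsEquivAut_apply, Units.val_mk0, smul_eq_mul]
  rw [mul_comm]
  congr 2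
  push_cast
  field_simp

/-- The spectral integral splits into two half-line integrals, the negative frequencies being
reflected. -/
lemma Dop_eq (a b γ : ℂ) {m : ℕ} (hre : γ.re = m) (φ gp gn : SchwartzMap ℝ ℂ)
    (hp : ∀ ω, gp ω = FT φ ω) (hn : ∀ ω, gn ω = FT φ (-ω)) (x : ℝ) :
    Dop a b γ φ x = (1 / (2 * (Real.pi : ℂ))) *
      (a * (∫ ω in Set.Ioi 0, osc gp γ x ω) + b * ∫ ω in Set.Ioi 0, osc gn γ (-x) ω) := by
  set f : ℝ → ℂ := fun ω =>
    FT φ ω * hab a b γ ω * Complex.exp (Complex.I * (ω : ℂ) * (x : ℂ)) with hf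
  have h1 : Set.EqOn f (fun ω => a * osc gp γ x ω) (Set.Ioi 0) := by
    intro ω hω
    have hω : 0 < ω := hω
    simp only [hf, osc, hab, if_pos hω, hp]
    ring
  have h2 : Set.EqOn (fun ω => f (-ω)) (fun ω => b * osc gn γ (-x) ω) (Set.Ioi 0) := by
    intro ω hω
    have hω : 0 < ω := hω
    simp only [hf, osc, hab, if_neg (not_lt.2 (neg_nonpos.2 hω.le)), if_pos (neg_lt_zero.2 hω),
      hn, neg_neg]
    push_cast
    rw [show Complex.I * -(ω : ℂ) * x = Complex.I * ω * -x by ring]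
    ring
  have i1 : IntegrableOn f (Set.Ioi 0) :=
    IntegrableOn.congr_fun ((integrableOn_osc_nat gp hre x le_rfl).const_mul a) h1.symm
      measurableSet_Ioi
  have i2' : IntegrableOn (fun ω => f (-ω)) (Set.Ioi 0) :=
    IntegrableOn.congr_fun ((integrableOn_osc_nat gn hre (-x) le_rfl).const_mul b) h2.symm
      measurableSet_Ioi
  have i2 : IntegrableOn f (Set.Iic 0) := by
    rw [integrableOn_Iic_iff_integrableOn_Iio]
    rw [← neg_zero] at i2'
    simpa only [neg_neg] using i2'.comp_neg_Iio (c := 0)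
  have hsplit : ∫ ω, f ω = (∫ ω in Set.Iic 0, f ω) + ∫ ω in Set.Ioi 0, f ω := by
    rw [← setIntegral_union (Set.Iic_disjoint_Ioi le_rfl) measurableSet_Ioi i2 i1,
      Set.Iic_union_Ioi, setIntegral_univ]
  have e2 : ∫ ω in Set.Iic 0, f ω = b * ∫ ω in Set.Ioi 0, osc gn γ (-x) ω := by
    rw [← integral_const_mul, ← setIntegral_congr_fun measurableSet_Ioi h2,
      integral_comp_neg_Ioi, neg_zero]
  have e1 : ∫ ω in Set.Ioi 0, f ω = a * ∫ ω in Set.Ioi 0, osc gp γ x ω := by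
    rw [← integral_const_mul, ← setIntegral_congr_fun measurableSet_Ioi h1]
  rw [Dop, hsplit, e1, e2, add_comm]

/-! ### Integrability of powers -/

/-- The bound with logarithmic loss is `p`-integrable as soon as `p > 1/(m + 1)`: the logarithm
costs an arbitrarily small power of `1 + |x|`. -/
lemma lintegral_rpow_lt_top {f : ℝ → ℝ} (hf0 : ∀ x, 0 ≤ f x) {c : ℝ} (hc : 0 < c) (m : ℕ)
    (hf : ∀ x, f x ≤ c * (1 + Real.log (1 + |x|)) / (1 + |x| ^ (m + 1)))
    {p : ℝ} (hp : 1 / ((m : ℝ) + 1) < p) :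
    ∫⁻ x, ENNReal.ofReal (f x ^ p) < ⊤ := by
  have hm1 : (0 : ℝ) < m + 1 := by positivity
  have hp0 : 0 < p := (by positivity : 0 < 1 / ((m : ℝ) + 1)).trans hp
  have hmp : 1 < (m + 1) * p := by
    rw [div_lt_iff₀ hm1] at hp
    linarith
  -- half of the available room `m + 1 - 1/p`
  set ε : ℝ := (m + 1 - 1 / p) / 2 with hε
  have hε0 : 0 < ε := by
    have : 1 / p < m + 1 := by rw [div_lt_iff₀ hp0]; exact hmp
    rw [hε]; linarith
  set r : ℝ := (m + 1 - ε) * p with hr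
  have hr1 : 1 < r := by
    have : r = ((m + 1) * p + 1) / 2 := by
      rw [hr, hε]; field_simp; ring
    linarith
  set K : ℝ := c * (1 + 1 / ε) * 2 ^ m with hK
  have hK0 : 0 < K := by positivity
  have hb : ∀ x, f x ≤ K * (1 + |x|) ^ (-(m + 1 - ε)) := by
    intro x
    have ht : 0 < 1 + |x| := by positivity
    have hte : 1 ≤ (1 + |x|) ^ ε := Real.one_le_rpow (by linarith [abs_nonneg x]) hε0.le
    have hlog : 1 + Real.log (1 + |x|) ≤ (1 + 1 / ε) * (1 + |x|) ^ ε := by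
      have := Real.log_le_rpow_div ht.le hε0
      calc _ ≤ (1 + |x|) ^ ε + (1 + |x|) ^ ε / ε := add_le_add hte this
        _ = _ := by ring
    have hpow : (1 + |x|) ^ (m + 1) ≤ 2 ^ m * (1 + |x| ^ (m + 1)) := by
      simpa using add_pow_le zero_le_one (abs_nonneg x) (m + 1)
    refine (hf x).trans ?_
    rw [div_le_iff₀ (by positivity)]
    have hsplit : (1 + |x|) ^ (-((m : ℝ) + 1 - ε)) * (1 + |x|) ^ (m + 1) = (1 + |x|) ^ ε := by
      rw [← Real.rpow_natCast (1 + |x|) (m + 1), ← Real.rpow_add ht]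
      congr 1
      push_cast
      ring
    calc c * (1 + Real.log (1 + |x|)) ≤ c * ((1 + 1 / ε) * (1 + |x|) ^ ε) := by gcongr
      _ = c * (1 + 1 / ε) * (1 + |x|) ^ (-((m : ℝ) + 1 - ε)) * (1 + |x|) ^ (m + 1) := by
          rw [← hsplit]; ring
      _ ≤ c * (1 + 1 / ε) * (1 + |x|) ^ (-((m : ℝ) + 1 - ε)) *
            (2 ^ m * (1 + |x| ^ (m + 1))) := by gcongr
      _ = K * (1 + |x|) ^ (-((m : ℝ) + 1 - ε)) * (1 + |x| ^ (m + 1)) := by rw [hK]; ring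
  have hfin : ∫⁻ x : ℝ, ENNReal.ofReal ((1 + ‖x‖) ^ (-r)) < ⊤ :=
    finite_integral_one_add_norm (by simpa using hr1)
  calc ∫⁻ x, ENNReal.ofReal (f x ^ p)
      ≤ ∫⁻ x : ℝ, ENNReal.ofReal (K ^ p) * ENNReal.ofReal ((1 + ‖x‖) ^ (-r)) := by
        refine lintegral_mono fun x => ?_
        rw [← ENNReal.ofReal_mul (by positivity)]
        refine ENNReal.ofReal_le_ofReal ?_
        have ht : 0 ≤ 1 + |x| := by positivity
        calc f x ^ p ≤ (K * (1 + |x|) ^ (-(m + 1 - ε))) ^ p :=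
              Real.rpow_le_rpow (hf0 x) (hb x) hp0.le
          _ = K ^ p * (1 + ‖x‖) ^ (-r) := by
              rw [Real.mul_rpow hK0.le (by positivity), ← Real.rpow_mul ht, hr,
                Real.norm_eq_abs, neg_mul]
    _ < ⊤ := by
        rw [lintegral_const_mul' _ _ ENNReal.ofReal_ne_top]
        exact ENNReal.mul_lt_top ENNReal.ofReal_lt_top hfin

/-! ### Decay and integrability of the derivative -/

/-- when `Re γ` is a positive integer `m` but `h_{a,b}^γ` is not a pure monomial
(`Im γ ≠ 0` or `b ≠ (-1)^m a`), the output of `D_{a,b}^γ` has a logarithmically corrected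
decay and the corresponding `p`-integrability. -/
theorem statement4 (a b γ : ℂ) (ha : a ≠ 0) (hb : b ≠ 0) (m : ℕ) (hm : 1 ≤ m)
    (hre : γ.re = (m : ℝ)) (hnot : γ.im ≠ 0 ∨ b ≠ (-1 : ℂ) ^ m * a)
    (φ : SchwartzMap ℝ ℂ) :
    ∃ c : ℝ, 0 < c ∧
      (∀ x : ℝ, ‖Dop a b γ ⇑φ x‖ ≤
        c * (1 + Real.log (1 + |x|)) / (1 + |x| ^ (γ.re + 1))) ∧
      (∀ p : ℝ, 1 / (γ.re + 1) < p →
        ∫⁻ x : ℝ, ENNReal.ofReal (‖Dop a b γ ⇑φ x‖ ^ p) < ⊤) := by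
  obtain ⟨gp, hgp⟩ := exists_schwartz_FT φ one_ne_zero
  obtain ⟨gn, hgn⟩ := exists_schwartz_FT φ (neg_ne_zero.2 one_ne_zero)
  obtain ⟨A, hA, hAx⟩ := exists_decay_global m γ hre gp
  obtain ⟨B, hB, hBx⟩ := exists_decay_global m γ hre gn
  set k : ℂ := 1 / (2 * (Real.pi : ℂ)) with hk
  set c : ℝ := ‖k‖ * (‖a‖ * A + ‖b‖ * B) + 1 with hc
  have hc0 : 0 < c := by positivity
  have main : ∀ x : ℝ, ‖Dop a b γ φ x‖ ≤
      c * (1 + Real.log (1 + |x|)) / (1 + |x| ^ (m + 1)) := by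
    intro x
    have hl : 0 ≤ Real.log (1 + |x|) := Real.log_nonneg (by linarith [abs_nonneg x])
    set Q : ℝ := (1 + Real.log (1 + |x|)) / (1 + |x| ^ (m + 1)) with hQ
    have hQ0 : 0 ≤ Q := by positivity
    have h1 := hAx x
    have h2 := hBx (-x)
    rw [abs_neg] at h2
    rw [mul_div_assoc, ← hQ] at h1 h2 ⊢
    rw [Dop_eq a b γ hre φ gp gn (by simpa using hgp) (by simpa using hgn) x, norm_mul, ← hk]
    calc _ ≤ ‖k‖ * (‖a‖ * (A * Q) + ‖b‖ * (B * Q)) := by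
          gcongr
          refine (norm_add_le _ _).trans ?_
          rw [norm_mul, norm_mul]
          gcongr
      _ ≤ c * Q := by rw [hc]; linarith
  refine ⟨c, hc0, fun x => ?_, fun p hp => ?_⟩
  · have : |x| ^ (γ.re + 1) = |x| ^ (m + 1) := by
      rw [hre, ← Real.rpow_natCast]
      push_cast
      rfl
    rw [this]
    exact main x
  · rw [hre] at hp
    exact lintegral_rpow_lt_top (fun x => norm_nonneg _) hc0 m main hp
end

section
/- Let a, b ∈ ℂ \ {0} and γ ∈ ℂ with Re(γ) > 0, Re(γ) ∉ ℕ, and set k = ⌊Re(γ)⌋, assuming k ≥ 1. Then for all Schwartz functions φ, ψ : ℝ → ℂ one has ∫_ℝ (I_{a,b}^{γ;k} φ)(x) · ψ(x) dx = ∫_ℝ φ(x) · (I_{a,b}^{(γ;k)*} ψ)(x) dx, where (I_{a,b}^{(γ;k)*} ψ)(x) = (1/(2π)) ∫_ℝ (ψ̂(ω) − Σ_{j=0}^{k−1} ψ̂^{(j)}(0) ω^j / j!) / h_{a,b}^γ(−ω) · e^{iωx} dω; under these hypotheses both integrals converge absolutely. -/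
/-!
The theorem is two applications of Fubini. Write `expRem k t` for the Taylor remainder
`e^{it} - ∑_{j<k} (it)^j / j!`. Pairing `I φ` with `ψ` gives the double integral of
`φ̂(ω) expRem k (ωx) ψ(x) / h(ω)`. Integrating in `x` first produces
`∫ expRem k (ωx) ψ(x) dx`, which is the Taylor remainder `R` of `ψ̂` at the point `-ω`
(`FT_sub_taylor`). After `ω ↦ -ω` one is left with `∫ φ̂(-ω) R(ω) / h(-ω) dω`; writing out
`φ̂(-ω) = ∫ φ(x) e^{iωx} dx` and applying Fubini again gives the pairing of `φ` with `I* ψ`.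

Absolute convergence rests on one majorant. Since `k = ⌊Re γ⌋` and `Re γ` is not an integer,
`s = k - Re γ` lies strictly between `-1` and `0`, so the function equal to `|ω|^s` for `|ω| ≤ 1`
and `|ω|^{s-1}` for `|ω| > 1` is integrable (`integrable_powMajorant`). It dominates
`g(ω) / h(ω)` as soon as `g(ω) = O(min(|ω|^k, |ω|^{k-1}))` (`norm_mul_inv_hab_le`). This applies
to `g = φ̂(ω) |ω|^k`, by boundedness and decay of `φ̂`, and to `g = R`, because
`expRem k t = O(min(|t|^k, |t|^{k-1}))` for `k ≥ 1` (`expRem_bound`).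
-/

open MeasureTheory Complex

open scoped FourierTransform

/-! ### The exponential remainder and the integrable majorant -/

/-- The Taylor remainder of order `k` of `t ↦ e^{it}` at `0`. -/
noncomputable def expRem (k : ℕ) (t : ℝ) : ℂ :=
  exp (I * t) - ∑ j ∈ Finset.range k, (I * t) ^ j / (j.factorial : ℂ)

/-- The majorant `|ω|^s` near the origin and `|ω|^{s-1}` at infinity. -/
noncomputable def powMajorant (s : ℝ) (ω : ℝ) : ℝ :=
  if |ω| ≤ 1 then |ω| ^ s else |ω| ^ (s - 1)

lemma continuous_expRem (k : ℕ) : Continuous (expRem k) := by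
  unfold expRem; fun_prop

lemma expRem_bound (m : ℕ) (t : ℝ) :
    ‖expRem (m + 1) t‖ ≤ (m + 4) * |t| ^ (m + 1) ∧ ‖expRem (m + 1) t‖ ≤ (m + 4) * |t| ^ m := by
  have hn : ‖I * (t : ℂ)‖ = |t| := by simp
  rcases le_total |t| 1 with h | h
  · have h1 := norm_exp_sub_sum_le_norm_mul_exp (I * (t : ℂ)) (m + 1)
    rw [hn] at h1
    have h2 : Real.exp |t| ≤ 3 := by
      have := Real.exp_le_exp.2 h
      linarith [Real.exp_one_lt_d9]
    have h3 : |t| ^ (m + 1) ≤ |t| ^ m := pow_le_pow_of_le_one (abs_nonneg t) h (Nat.le_succ m)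
    have h4 : ‖expRem (m + 1) t‖ ≤ (m + 4) * |t| ^ (m + 1) := by
      refine h1.trans ?_
      rw [mul_comm]
      gcongr
      linarith [(Nat.cast_nonneg m : (0 : ℝ) ≤ m)]
    exact ⟨h4, h4.trans (by gcongr)⟩
  · have h3 : |t| ^ m ≤ |t| ^ (m + 1) := pow_le_pow_right₀ h (Nat.le_succ m)
    have h1 : (1 : ℝ) ≤ |t| ^ m := one_le_pow₀ h
    have h4 : ‖expRem (m + 1) t‖ ≤ (m + 4) * |t| ^ m := by
      have e : ‖exp (I * (t : ℂ))‖ = 1 := by rw [mul_comm]; exact norm_exp_ofReal_mul_I t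
      have h5 : ‖∑ j ∈ Finset.range (m + 1), (I * (t : ℂ)) ^ j / (j.factorial : ℂ)‖
          ≤ ∑ j ∈ Finset.range (m + 1), |t| ^ m := by
        refine (norm_sum_le _ _).trans (Finset.sum_le_sum fun j hj => ?_)
        rw [norm_div, norm_pow, hn, norm_natCast]
        refine (div_le_self (by positivity) (by exact_mod_cast j.factorial_pos)).trans ?_
        exact pow_le_pow_right₀ h (by simpa [Nat.lt_succ_iff] using hj)
      simp only [Finset.sum_const, Finset.card_range, nsmul_eq_mul, Nat.cast_add,
        Nat.cast_one] at h5
      refine (norm_sub_le _ _).trans ?_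
      rw [e]
      nlinarith
    exact ⟨h4.trans (by gcongr), h4⟩

lemma integrable_powMajorant {s : ℝ} (h1 : -1 < s) (h0 : s < 0) : Integrable (powMajorant s) := by
  have key : IntegrableOn (powMajorant s) (Set.Ioi 0) := by
    rw [← Set.Ioc_union_Ioi_eq_Ioi (zero_le_one' ℝ)]
    refine IntegrableOn.union ?_ ?_
    · have := (intervalIntegrable_iff_integrableOn_Ioc_of_le zero_le_one).1
        (intervalIntegral.intervalIntegrable_rpow' (a := 0) (b := 1) h1)
      refine this.congr_fun (fun x hx => ?_) measurableSet_Ioc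
      simp [powMajorant, abs_of_pos hx.1, hx.2]
    · have := integrableOn_Ioi_rpow_of_lt (show s - 1 < -1 by linarith) zero_lt_one
      refine this.congr_fun (fun x hx => ?_) measurableSet_Ioi
      have hx' : (1 : ℝ) < x := hx
      simp [powMajorant, abs_of_pos (zero_lt_one.trans hx'), not_le.2 hx']
  have key2 : IntegrableOn (powMajorant s) (Set.Iic 0) := by
    rw [← Measure.map_neg_eq_self (volume : Measure ℝ)]
    let m : MeasurableEmbedding fun x : ℝ => -x := (Homeomorph.neg ℝ).measurableEmbedding
    rw [m.integrableOn_map_iff]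
    have : powMajorant s ∘ (fun x : ℝ => -x) = powMajorant s := by
      ext x; simp [powMajorant]
    rw [this, Set.neg_preimage, Set.neg_Iic, neg_zero]
    exact (integrableOn_Ici_iff_integrableOn_Ioi).2 key
  rw [← integrableOn_univ, ← Set.Iic_union_Ioi (a := (0 : ℝ))]
  exact key2.union key

/-! ### Size of the multiplier -/

lemma measurable_hab (a b γ : ℂ) : Measurable (hab a b γ) := by
  unfold hab
  refine Measurable.ite measurableSet_Ioi (by fun_prop)
    (Measurable.ite measurableSet_Iio (by fun_prop) measurable_const)

lemma norm_inv_hab_le (a b γ : ℂ) (ω : ℝ) :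
    ‖(hab a b γ ω)⁻¹‖ ≤ (‖a‖⁻¹ + ‖b‖⁻¹) * |ω| ^ (-γ.re) := by
  rcases lt_trichotomy ω 0 with h | h | h
  · have h' : 0 < -ω := by linarith
    rw [hab, if_neg (not_lt.2 h.le), if_pos h, norm_inv, norm_mul,
      norm_cpow_eq_rpow_re_of_pos h', abs_of_neg h, mul_inv, Real.rpow_neg h'.le]
    gcongr
    simp
  · subst h
    simp only [hab, lt_irrefl, if_false, inv_zero, norm_zero]
    positivity
  · rw [hab, if_pos h, norm_inv, norm_mul,
      norm_cpow_eq_rpow_re_of_pos h, abs_of_pos h, mul_inv, Real.rpow_neg h.le]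
    gcongr
    simp

/-- Dividing by `h_{a,b}^γ` a quantity of size `min(|ω|^{m+1}, |ω|^m)` leaves something dominated
by the integrable majorant. -/
lemma norm_mul_inv_hab_le (a b γ : ℂ) (m : ℕ) (ω C N : ℝ) (hC : 0 ≤ C)
    (h1 : N ≤ C * |ω| ^ (m + 1)) (h2 : N ≤ C * |ω| ^ m) :
    N * ‖(hab a b γ ω)⁻¹‖ ≤
      C * (‖a‖⁻¹ + ‖b‖⁻¹) * powMajorant ((m + 1 : ℕ) - γ.re) ω := by
  rcases eq_or_ne ω 0 with rfl | hω
  · simp only [hab, lt_irrefl, if_false, inv_zero, norm_zero, mul_zero, powMajorant]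
    split_ifs <;> positivity
  have hp : 0 < |ω| := abs_pos.2 hω
  have hM := norm_inv_hab_le a b γ ω
  unfold powMajorant
  split_ifs with h
  · rw [sub_eq_add_neg, Real.rpow_add hp, Real.rpow_natCast]
    calc N * ‖(hab a b γ ω)⁻¹‖ ≤ (C * |ω| ^ (m + 1)) * ((‖a‖⁻¹ + ‖b‖⁻¹) * |ω| ^ (-γ.re)) := by
          gcongr
      _ = _ := by ring
  · rw [show ((m + 1 : ℕ) : ℝ) - γ.re - 1 = (m : ℝ) + -γ.re by push_cast; ring,
      Real.rpow_add hp, Real.rpow_natCast]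
    calc N * ‖(hab a b γ ω)⁻¹‖ ≤ (C * |ω| ^ m) * ((‖a‖⁻¹ + ‖b‖⁻¹) * |ω| ^ (-γ.re)) := by
          gcongr
      _ = _ := by ring

/-! ### The Fourier transform and its Taylor remainder at the origin -/

lemma FT_eq_fourier (f : ℝ → ℂ) (ω : ℝ) : FT f ω = 𝓕 f ((2 * Real.pi)⁻¹ * ω) := by
  rw [Real.fourier_real_eq_integral_exp_smul, FT]
  congr 1
  ext x
  rw [smul_eq_mul, mul_comm]
  congr 2
  push_cast
  have : (Real.pi : ℂ) ≠ 0 := by exact_mod_cast Real.pi_ne_zero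
  field_simp

lemma continuous_FT (φ : SchwartzMap ℝ ℂ) : Continuous (FT φ) := by
  rw [funext (FT_eq_fourier φ), ← SchwartzMap.fourier_coe]
  exact (SchwartzMap.continuous _).comp (by fun_prop)

/-- Boundedness of `φ̂` and its first-order decay at infinity. -/
lemma FT_decay (φ : SchwartzMap ℝ ℂ) :
    ∃ C : ℝ, 0 ≤ C ∧ ∀ ω, ‖FT φ ω‖ ≤ C ∧ ‖FT φ ω‖ * |ω| ≤ C := by
  obtain ⟨C0, h0, H0⟩ := (𝓕 φ).decay 0 0
  obtain ⟨C1, h1, H1⟩ := (𝓕 φ).decay 1 0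
  have hpi : 0 < 2 * Real.pi := by positivity
  refine ⟨C0 + 2 * Real.pi * C1, by positivity, fun ω => ?_⟩
  have e : FT φ ω = (𝓕 φ) ((2 * Real.pi)⁻¹ * ω) := by
    rw [FT_eq_fourier, ← SchwartzMap.fourier_coe]
  have A := H0 ((2 * Real.pi)⁻¹ * ω)
  have B := H1 ((2 * Real.pi)⁻¹ * ω)
  simp only [norm_iteratedFDeriv_zero, pow_zero, one_mul, pow_one, norm_mul, Real.norm_eq_abs,
    ← e] at A B
  rw [abs_of_pos (inv_pos.2 hpi), mul_assoc, inv_mul_le_iff₀ hpi] at B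
  constructor
  · nlinarith [mul_pos hpi h1]
  · nlinarith

lemma integrable_pow_mul_schwartz (ψ : SchwartzMap ℝ ℂ) (j : ℕ) :
    Integrable (fun x : ℝ => (x : ℂ) ^ j * ψ x) := by
  refine (ψ.integrable_pow_mul volume j).mono ?_ (.of_forall fun x => ?_)
  · have := ψ.continuous
    exact (by fun_prop : Continuous fun x : ℝ => (x : ℂ) ^ j * ψ x).aestronglyMeasurable
  · simp

lemma iteratedDeriv_FT_zero (ψ : SchwartzMap ℝ ℂ) (j : ℕ) :
    iteratedDeriv j (FT ψ) 0 = ∫ x : ℝ, (-I * x) ^ j * ψ x := by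
  have hc : ContDiff ℝ j (𝓕 (ψ : ℝ → ℂ)) := by
    rw [← SchwartzMap.fourier_coe]; exact SchwartzMap.smooth _ _
  rw [funext (FT_eq_fourier ψ), iteratedDeriv_comp_const_smul hc]
  rw [Real.iteratedDeriv_fourier (N := ⊤) (fun n _ => ?_) le_top]
  · beta_reduce
    rw [mul_zero, Real.fourier_real_eq_integral_exp_smul, ← integral_smul]
    congr 1
    ext x
    simp only [mul_zero, ofReal_zero, zero_mul, exp_zero, smul_eq_mul, real_smul,
      ofReal_pow, ← mul_assoc]
    rw [mul_one, ← mul_pow]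
    congr 2
    push_cast
    have : (Real.pi : ℂ) ≠ 0 := by exact_mod_cast Real.pi_ne_zero
    field_simp
  · simpa using integrable_pow_mul_schwartz ψ n

/-- The Taylor remainder of `ψ̂` at `0` is `ψ` integrated against the remainder of the
exponential. -/
lemma FT_sub_taylor (ψ : SchwartzMap ℝ ℂ) (k : ℕ) (ω : ℝ) :
    FT ψ ω - ∑ j ∈ Finset.range k, iteratedDeriv j (FT ψ) 0 * (ω : ℂ) ^ j / (j.factorial : ℂ) =
      ∫ x : ℝ, expRem k (-ω * x) * ψ x := by
  have hψ := ψ.continuous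
  have hi : ∀ j : ℕ, Integrable
      (fun x : ℝ => (-I * x) ^ j * ψ x * ((ω : ℂ) ^ j / (j.factorial : ℂ))) := fun j => by
    have := (integrable_pow_mul_schwartz ψ j).const_mul ((-I) ^ j)
    refine Integrable.mul_const (this.congr (.of_forall fun x => ?_)) _
    simp only [mul_pow]; ring
  have he : Integrable (fun x : ℝ => ψ x * exp (-(I * (ω : ℂ) * (x : ℂ)))) := by
    refine ψ.integrable.mono (by fun_prop) (.of_forall fun x => ?_)
    rw [norm_mul, show -(I * (ω : ℂ) * (x : ℂ)) = ((-(ω * x) : ℝ) : ℂ) * I by push_cast; ring,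
      norm_exp_ofReal_mul_I, mul_one]
  simp_rw [iteratedDeriv_FT_zero, mul_div_assoc, ← integral_mul_const]
  rw [← integral_finsetSum _ (fun j _ => hi j), FT,
    ← integral_sub he (integrable_finsetSum _ fun j _ => hi j)]
  congr 1
  ext x
  rw [expRem, sub_mul, Finset.sum_mul]
  congr 1
  · rw [mul_comm]; congr 2; push_cast; ring
  · refine Finset.sum_congr rfl fun j _ => ?_
    rw [show I * ((-ω * x : ℝ) : ℂ) = (-I * x) * ω by push_cast; ring, mul_pow (-I * (x : ℂ))]
    ring

lemma FT_sub_taylor_bound (ψ : SchwartzMap ℝ ℂ) (m : ℕ) :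
    ∃ C : ℝ, 0 ≤ C ∧ ∀ ω : ℝ, ‖∫ x : ℝ, expRem (m + 1) (-ω * x) * ψ x‖ ≤ C * |ω| ^ (m + 1) ∧
      ‖∫ x : ℝ, expRem (m + 1) (-ω * x) * ψ x‖ ≤ C * |ω| ^ m := by
  have hp : ∀ n : ℕ, 0 ≤ ∫ x : ℝ, ‖x‖ ^ n * ‖ψ x‖ := fun n =>
    integral_nonneg fun x => by positivity
  have hb : ∀ n : ℕ, (∀ t : ℝ, ‖expRem (m + 1) t‖ ≤ (m + 4) * |t| ^ n) → ∀ ω : ℝ,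
      ‖∫ x : ℝ, expRem (m + 1) (-ω * x) * ψ x‖ ≤
        (m + 4) * (∫ x : ℝ, ‖x‖ ^ n * ‖ψ x‖) * |ω| ^ n := by
    intro n hn ω
    rw [mul_right_comm, ← integral_const_mul]
    refine norm_integral_le_of_norm_le ((ψ.integrable_pow_mul volume n).const_mul _)
      (.of_forall fun x => ?_)
    rw [norm_mul, ← mul_assoc]
    gcongr
    refine (hn _).trans_eq ?_
    rw [abs_mul, abs_neg, mul_pow, Real.norm_eq_abs, mul_assoc]
  refine ⟨(m + 4) * (∫ x : ℝ, ‖x‖ ^ (m + 1) * ‖ψ x‖) + (m + 4) * (∫ x : ℝ, ‖x‖ ^ m * ‖ψ x‖),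
    add_nonneg (mul_nonneg (by positivity) (hp _)) (mul_nonneg (by positivity) (hp _)),
    fun ω => ⟨(hb _ (fun t => (expRem_bound m t).1) ω).trans ?_,
      (hb _ (fun t => (expRem_bound m t).2) ω).trans ?_⟩⟩
  · gcongr
    exact le_add_of_nonneg_right (mul_nonneg (by positivity) (hp _))
  · gcongr
    exact le_add_of_nonneg_left (mul_nonneg (by positivity) (hp _))

/-! ### The two Fubini kernels -/

/-- Joint integrability of the kernel defining the pairing of `I φ` with `ψ`. -/
lemma integrable_kernel_left (a b γ : ℂ) (m : ℕ) (h1 : -1 < ((m + 1 : ℕ) : ℝ) - γ.re)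
    (h0 : ((m + 1 : ℕ) : ℝ) - γ.re < 0) (φ ψ : SchwartzMap ℝ ℂ) :
    Integrable (fun p : ℝ × ℝ =>
      FT φ p.2 * (expRem (m + 1) (p.2 * p.1) / hab a b γ p.2) * ψ p.1)
      ((volume : Measure ℝ).prod volume) := by
  obtain ⟨C, hC, hF⟩ := FT_decay φ
  have hdom := ((ψ.integrable_pow_mul volume (m + 1)).const_mul ((m : ℝ) + 4)).mul_prod
    ((integrable_powMajorant h1 h0).const_mul (C * (‖a‖⁻¹ + ‖b‖⁻¹)))
  refine hdom.mono' ?_ (.of_forall fun p => ?_)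
  · have m1 := (continuous_FT φ).measurable
    have m2 := (continuous_expRem (m + 1)).measurable
    have m3 := measurable_hab a b γ
    have m4 := ψ.continuous.measurable
    exact Measurable.aestronglyMeasurable (by fun_prop)
  · have hb := norm_mul_inv_hab_le a b γ m p.2 C (‖FT φ p.2‖ * |p.2| ^ (m + 1)) hC
      (by gcongr; exact (hF _).1)
      (by rw [pow_succ', ← mul_assoc]; gcongr; exact (hF _).2)
    have hr := (expRem_bound m (p.2 * p.1)).1
    rw [norm_mul, norm_mul, div_eq_mul_inv, norm_mul]
    calc _ ≤ ‖FT φ p.2‖ * (((m + 4) * |p.2 * p.1| ^ (m + 1)) * ‖(hab a b γ p.2)⁻¹‖) * ‖ψ p.1‖ := by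
          gcongr
      _ = ((m + 4) * (‖p.1‖ ^ (m + 1) * ‖ψ p.1‖)) *
          (‖FT φ p.2‖ * |p.2| ^ (m + 1) * ‖(hab a b γ p.2)⁻¹‖) := by
          rw [abs_mul, mul_pow, Real.norm_eq_abs]; ring
      _ ≤ _ := by gcongr

/-- Joint integrability of the kernel defining the pairing of `φ` with `I* ψ`. -/
lemma integrable_kernel_right (a b γ : ℂ) (m : ℕ) (h1 : -1 < ((m + 1 : ℕ) : ℝ) - γ.re)
    (h0 : ((m + 1 : ℕ) : ℝ) - γ.re < 0) (φ ψ : SchwartzMap ℝ ℂ) :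
    Integrable (fun p : ℝ × ℝ =>
      φ p.1 * ((∫ y : ℝ, expRem (m + 1) (-p.2 * y) * ψ y) / hab a b γ (-p.2) *
        exp (I * (p.2 : ℂ) * (p.1 : ℂ))))
      ((volume : Measure ℝ).prod volume) := by
  obtain ⟨C, hC, hF⟩ := FT_sub_taylor_bound ψ m
  have hdom := (φ.integrable (μ := volume)).norm.mul_prod
    (((integrable_powMajorant h1 h0).const_mul (C * (‖a‖⁻¹ + ‖b‖⁻¹))).comp_neg)
  refine hdom.mono' ?_ (.of_forall fun p => ?_)
  · have m1 : Measurable (fun ω : ℝ => ∫ y : ℝ, expRem (m + 1) (-ω * y) * ψ y) := by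
      simp_rw [← FT_sub_taylor]
      have := (continuous_FT ψ)
      exact (by fun_prop : Continuous _).measurable
    have m3 := measurable_hab a b γ
    have m4 := φ.continuous.measurable
    have m5 : Measurable (fun p : ℝ × ℝ => exp (I * (p.2 : ℂ) * (p.1 : ℂ))) := by fun_prop
    exact ((m4.comp measurable_fst).mul (((m1.comp measurable_snd).div
      (m3.comp measurable_snd.neg)).mul m5)).aestronglyMeasurable
  · have hb := norm_mul_inv_hab_le a b γ m (-p.2) C
      ‖∫ y : ℝ, expRem (m + 1) (-p.2 * y) * ψ y‖ hC
      (by rw [abs_neg]; exact (hF p.2).1) (by rw [abs_neg]; exact (hF p.2).2)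
    rw [norm_mul, norm_mul, div_eq_mul_inv, norm_mul,
      show I * (p.2 : ℂ) * (p.1 : ℂ) = ((p.2 * p.1 : ℝ) : ℂ) * I by push_cast; ring,
      norm_exp_ofReal_mul_I, mul_one]
    exact mul_le_mul_of_nonneg_left hb (norm_nonneg _)

lemma Iop_mul_eq (a b γ : ℂ) (k : ℕ) (φ ψ : ℝ → ℂ) (x : ℝ) :
    Iop a b γ k φ x * ψ x = (1 / (2 * (Real.pi : ℂ))) *
      ∫ ω : ℝ, FT φ ω * (expRem k (ω * x) / hab a b γ ω) * ψ x := by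
  rw [Iop, mul_assoc, ← integral_mul_const]
  congr 2
  ext ω
  rw [expRem]
  congr 4
  · push_cast; ring_nf
  · refine Finset.sum_congr rfl fun j _ => ?_
    rw [← mul_pow]; push_cast; ring_nf

lemma mul_Istar_eq (a b γ : ℂ) (k : ℕ) (φ : ℝ → ℂ) (ψ : SchwartzMap ℝ ℂ) (x : ℝ) :
    φ x * Istar a b γ k ψ x = (1 / (2 * (Real.pi : ℂ))) *
      ∫ ω : ℝ, φ x * ((∫ y : ℝ, expRem k (-ω * y) * ψ y) / hab a b γ (-ω) *
        exp (I * (ω : ℂ) * (x : ℂ))) := by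
  rw [Istar, mul_left_comm, ← integral_const_mul]
  simp_rw [FT_sub_taylor]

/-- `I_{a,b}^{(γ;k)*}` is the adjoint of `I_{a,b}^{γ;k}`, for
`Re γ > 0`, `Re γ ∉ ℕ` and `k = ⌊Re γ⌋ ≥ 1`. -/
theorem statement7 (a b γ : ℂ) (ha : a ≠ 0) (hb : b ≠ 0) (hγ : 0 < γ.re)
    (hγ' : ∀ n : ℕ, γ.re ≠ (n : ℝ)) (k : ℕ) (hk : (k : ℤ) = ⌊γ.re⌋) (hk1 : 1 ≤ k)
    (φ ψ : SchwartzMap ℝ ℂ) :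
    Integrable (fun x : ℝ => Iop a b γ k ⇑φ x * ψ x) ∧
    Integrable (fun x : ℝ => φ x * Istar a b γ k ⇑ψ x) ∧
    ∫ x : ℝ, Iop a b γ k ⇑φ x * ψ x = ∫ x : ℝ, φ x * Istar a b γ k ⇑ψ x := by
  obtain ⟨m, rfl⟩ : ∃ m, k = m + 1 := ⟨k - 1, by omega⟩
  obtain ⟨hle, hlt⟩ := Int.floor_eq_iff.1 hk.symm
  rw [Int.cast_natCast] at hle hlt
  have h1 : -1 < ((m + 1 : ℕ) : ℝ) - γ.re := by linarith
  have h0 : ((m + 1 : ℕ) : ℝ) - γ.re < 0 := by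
    have := lt_of_le_of_ne hle (hγ' (m + 1)).symm
    linarith
  have KL := integrable_kernel_left a b γ m h1 h0 φ ψ
  have KR := integrable_kernel_right a b γ m h1 h0 φ ψ
  simp_rw [Iop_mul_eq, mul_Istar_eq]
  refine ⟨KL.integral_prod_left.const_mul _, KR.integral_prod_left.const_mul _, ?_⟩
  rw [integral_const_mul, integral_const_mul]
  congr 1
  refine (integral_integral_swap KL).trans (Eq.trans ?_ (integral_integral_swap KR).symm)
  refine (integral_neg_eq_self _ _).symm.trans ?_
  congr 1
  ext ω
  -- Both inner integrals equal `φ̂(-ω) R(ω) / h(-ω)`, with `R` the Taylor remainder of `ψ̂`.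
  trans FT φ (-ω) * ((∫ y : ℝ, expRem (m + 1) (-ω * y) * ψ y) / hab a b γ (-ω))
  · rw [div_eq_mul_inv, ← integral_mul_const, ← integral_const_mul]
    congr 1
    ext x
    ring
  · rw [FT, ← integral_mul_const]
    congr 1
    ext x
    rw [show -(I * ((-ω : ℝ) : ℂ) * (x : ℂ)) = I * ω * x by push_cast; ring]
    ring
end

section
/- Let a, b ∈ ℂ \ {0} and γ ∈ ℂ with Re(γ) > 0, Re(γ) ∉ ℕ, and set k = ⌊Re(γ)⌋, assuming k ≥ 1. Then for every Schwartz function φ : ℝ → ℂ there exists a constant c > 0 such that |(I_{a,b}^{(γ;k)*} φ)(x)| ≤ c / |x|^{k+1−Re(γ)} for all x ∈ ℝ with |x| ≥ 1. -/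
/-!
Write `s = Re γ - k`, so that `0 < s < 1`. Since `φ̂` is a Schwartz function, its `k`-th derivative is
bounded by some `M`, and Taylor's formula bounds the remainder `φ̂ - Σ_{j<k} φ̂^{(j)}(0) ω^j / j!`
by `M |ω|^k` and its derivative by `M |ω|^{k-1}`, on the whole line (`norm_taylorRem_le`).
Dividing by `h(-ω)`, which is a multiple of `|ω|^γ` on each half-line, gives an amplitude of size
`O(|ω|^{-s})` whose derivative is `O(|ω|^{-s-1})`. An oscillatory integral with such an amplitude is
`O(|x|^{s-1})` (`norm_integral_Ioi_mul_exp_le`): the part `|ω| ≤ 1/|x|` is estimated directly, and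
the part `|ω| > 1/|x|` after one integration by parts.
-/


open MeasureTheory Complex

/-- The remainder `f(ω) - Σ_{j<k} f^{(j)}(0) ω^j / j!` of the Taylor expansion of `f` at `0`. -/
noncomputable def taylorRem (f : ℝ → ℂ) (k : ℕ) (ω : ℝ) : ℂ :=
  f ω - ∑ j ∈ Finset.range k, iteratedDeriv j f 0 * (ω : ℂ) ^ j / (j.factorial : ℂ)

/-- Taylor remainders commute with differentiation: the order drops by one. -/
lemma hasDerivAt_taylorRem {f : ℝ → ℂ} (hf : Differentiable ℝ f) (k : ℕ) (ω : ℝ) :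
    HasDerivAt (taylorRem f (k + 1)) (taylorRem (deriv f) k ω) ω := by
  unfold taylorRem
  refine (hf ω).hasDerivAt.sub ?_
  simp_rw [Finset.sum_range_succ' _ k, iteratedDeriv_succ']
  have h : ∀ j ∈ Finset.range k, HasDerivAt
      (fun w : ℝ => iteratedDeriv j (deriv f) 0 * (w : ℂ) ^ (j + 1) / ((j + 1).factorial : ℂ))
      (iteratedDeriv j (deriv f) 0 * (ω : ℂ) ^ j / (j.factorial : ℂ)) ω := by
    intro j _
    have h1 := (((hasDerivAt_id ω).ofReal_comp.pow (j + 1)).const_mul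
      (iteratedDeriv j (deriv f) 0)).div_const ((j + 1).factorial : ℂ)
    refine h1.congr_deriv ?_
    have h2 : (j.factorial : ℂ) ≠ 0 := by exact_mod_cast j.factorial_ne_zero
    have h3 : (j : ℂ) + 1 ≠ 0 := by exact_mod_cast j.succ_ne_zero
    rw [Nat.factorial_succ]
    push_cast
    simp only [id, mul_one]
    field_simp
  simp only [pow_zero]
  exact (HasDerivAt.fun_sum h).add_const _

lemma norm_taylorRem_le {M : ℝ} (k : ℕ) {f : ℝ → ℂ} (hf : ContDiff ℝ (⊤ : ℕ∞) f)
    (hM : ∀ ω, ‖iteratedDeriv k f ω‖ ≤ M) (ω : ℝ) : ‖taylorRem f k ω‖ ≤ M * |ω| ^ k := by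
  induction k generalizing f ω with
  | zero => simpa [taylorRem] using hM ω
  | succ k ih =>
    have hf' : ContDiff ℝ (⊤ : ℕ∞) (deriv f) := (contDiff_infty_iff_deriv.1 hf).2
    have hM0 : 0 ≤ M := (norm_nonneg _).trans (hM 0)
    have hb := ih hf' (by simpa [iteratedDeriv_succ'] using hM)
    have h0 : taylorRem f (k + 1) 0 = 0 := by
      simp [taylorRem, Finset.sum_range_succ']
    have := Convex.norm_image_sub_le_of_norm_hasDerivWithin_le (s := Metric.closedBall (0 : ℝ) |ω|)
      (f := taylorRem f (k + 1)) (x := 0) (y := ω) (C := M * |ω| ^ k)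
      (fun x _ => (hasDerivAt_taylorRem (hf.differentiable (by simp)) k x).hasDerivWithinAt)
      (fun x hx => (hb x).trans (by
        have : |x| ≤ |ω| := by simpa using hx
        gcongr))
      (convex_closedBall _ _) (by simp) (by simp)
    rw [h0, sub_zero, sub_zero, Real.norm_eq_abs] at this
    rwa [pow_succ, ← mul_assoc]

/-- Up to a dilation of the variable, `FT φ` is Mathlib's Fourier transform of `φ`; hence it is
again a Schwartz function. -/
lemma exists_schwartz_eq_FT (φ : SchwartzMap ℝ ℂ) : ∃ ψ : SchwartzMap ℝ ℂ, ⇑ψ = FT φ := by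
  have h : ((2 * Real.pi)⁻¹ : ℝ) ≠ 0 := by positivity
  refine ⟨SchwartzMap.compCLMOfContinuousLinearEquiv ℂ
    (ContinuousLinearEquiv.unitsEquivAut ℝ (Units.mk0 _ h)) (FourierTransform.fourier φ), ?_⟩
  ext ω
  simp only [SchwartzMap.compCLMOfContinuousLinearEquiv_apply, Function.comp, SchwartzMap.fourier_coe,
    Real.fourier_real_eq_integral_exp_smul, FT]
  refine integral_congr_ae (Filter.Eventually.of_forall fun x => ?_)
  simp only [ContinuousLinearEquiv.unitsEquivAut_apply, Units.val_mk0, smul_eq_mul]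
  rw [mul_comm]
  congr 2
  push_cast
  have : (Real.pi : ℂ) ≠ 0 := by exact_mod_cast Real.pi_ne_zero
  field_simp

/-- Decay of an oscillatory integral over a half-line whose amplitude is `O(ω^{-s})`, `0 < s < 1`,
with derivative `O(ω^{-s-1})`. The half-line is cut at `1/|x|`: below, the amplitude is integrated
in absolute value; above, one integration by parts gains a factor `1/|x|`. -/
lemma norm_integral_Ioi_mul_exp_le {G : ℝ → ℂ} {C s x : ℝ} (hs0 : 0 < s) (hs1 : s < 1)
    (hx : x ≠ 0) (hd : ∀ ω, 0 < ω → DifferentiableAt ℝ G ω)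
    (hG : ∀ ω, 0 < ω → ‖G ω‖ ≤ C * ω ^ (-s))
    (hG' : ∀ ω, 0 < ω → ‖deriv G ω‖ ≤ C * ω ^ (-s - 1))
    (hint : IntegrableOn (fun ω : ℝ => G ω * Complex.exp (I * ω * x)) (Set.Ioi 0)) :
    ‖∫ ω in Set.Ioi (0 : ℝ), G ω * Complex.exp (I * ω * x)‖
      ≤ C * (1 / (1 - s) + 1 + 1 / s) * |x| ^ (s - 1) := by
  have hx' : 0 < |x| := abs_pos.2 hx
  set ε : ℝ := |x|⁻¹ with hε
  have hε0 : 0 < ε := by positivity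
  have hnexp : ∀ ω : ℝ, ‖Complex.exp (I * ω * x)‖ = 1 := by
    intro ω
    have : I * (ω : ℂ) * x = ((ω * x : ℝ) : ℂ) * I := by push_cast; ring
    rw [this, Complex.norm_exp_ofReal_mul_I]
  have hIx : I * (x : ℂ) ≠ 0 := mul_ne_zero I_ne_zero (by exact_mod_cast hx)
  have hnIx : ‖I * (x : ℂ)‖ = |x| := by simp
  have hpow1 : ε ^ (1 - s) = |x| ^ (s - 1) := by
    rw [hε, Real.inv_rpow hx'.le, ← Real.rpow_neg hx'.le]; congr 1; ring
  have hpow2 : ε ^ (-s) / |x| = |x| ^ (s - 1) := by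
    rw [← hpow1, sub_eq_neg_add, Real.rpow_add hε0, Real.rpow_one, hε, div_eq_mul_inv]
  -- the part near the singularity
  have h1 : ‖∫ ω in Set.Ioc (0 : ℝ) ε, G ω * Complex.exp (I * ω * x)‖
      ≤ C * (1 / (1 - s)) * |x| ^ (s - 1) := by
    have hi : IntegrableOn (fun ω : ℝ => C * ω ^ (-s)) (Set.Ioc 0 ε) :=
      ((intervalIntegrable_iff_integrableOn_Ioc_of_le hε0.le).1
        (intervalIntegral.intervalIntegrable_rpow' (by linarith))).const_mul C
    refine (norm_integral_le_of_norm_le hi ((ae_restrict_mem measurableSet_Ioc).mono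
      fun ω hω => ?_)).trans_eq ?_
    · rw [norm_mul, hnexp, mul_one]
      exact hG ω hω.1
    · rw [integral_const_mul, ← intervalIntegral.integral_of_le hε0.le,
        integral_rpow (Or.inl (by linarith)), Real.zero_rpow (by linarith), sub_zero,
        ← hpow1, neg_add_eq_sub]
      ring
  have hCε : ∀ p : ℝ, p < -1 → IntegrableOn (fun ω : ℝ => C * ω ^ p) (Set.Ioi ε) := fun p hp =>
    (integrableOn_Ioi_rpow_of_lt hp hε0).const_mul C
  have hi2 : IntegrableOn (fun ω : ℝ => G ω * Complex.exp (I * ω * x)) (Set.Ioi ε) :=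
    hint.mono_set (Set.Ioi_subset_Ioi hε0.le)
  have hbd : ∀ ω ∈ Set.Ioi ε, ‖deriv G ω * Complex.exp (I * ω * x)‖ ≤ C * ω ^ (-s - 1) := by
    intro ω hω
    rw [norm_mul, hnexp, mul_one]
    exact hG' ω (hε0.trans hω)
  have hi3 : IntegrableOn (fun ω : ℝ => deriv G ω * Complex.exp (I * ω * x)) (Set.Ioi ε) := by
    refine Integrable.mono' (hCε (-s - 1) (by linarith)) ?_
      ((ae_restrict_mem measurableSet_Ioi).mono hbd)
    refine ((stronglyMeasurable_deriv G).mul ?_).aestronglyMeasurable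
    exact (by fun_prop : Continuous fun ω : ℝ => Complex.exp (I * ω * x)).stronglyMeasurable
  have hH : ∀ ω, 0 < ω → HasDerivAt (fun ω : ℝ => G ω * Complex.exp (I * ω * x) / (I * x))
      (G ω * Complex.exp (I * ω * x) + deriv G ω * Complex.exp (I * ω * x) / (I * x)) ω := by
    intro ω hω
    have he : HasDerivAt (fun ω : ℝ => Complex.exp (I * ω * x))
        (Complex.exp (I * ω * x) * (I * x)) ω := by
      have := (((hasDerivAt_id ω).ofReal_comp.const_mul I).mul_const (x : ℂ)).cexp
      simpa using this
    refine (((hd ω hω).hasDerivAt.mul he).div_const (I * x)).congr_deriv ?_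
    have hxc : (x : ℂ) ≠ 0 := by exact_mod_cast hx
    field_simp
    ring
  have hlim : Filter.Tendsto (fun ω : ℝ => G ω * Complex.exp (I * ω * x) / (I * x))
      Filter.atTop (nhds 0) := by
    have h0 : Filter.Tendsto (fun ω : ℝ => C * ω ^ (-s) / |x|) Filter.atTop (nhds 0) := by
      simpa using ((tendsto_rpow_neg_atTop hs0).const_mul C).div_const |x|
    refine squeeze_zero_norm' ?_ h0
    filter_upwards [Filter.eventually_gt_atTop 0] with ω hω
    rw [norm_div, norm_mul, hnexp, mul_one, hnIx]
    gcongr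
    exact hG ω hω
  have hibp := integral_Ioi_of_hasDerivAt_of_tendsto
    (hH ε hε0).continuousAt.continuousWithinAt (fun ω hω => hH ω (hε0.trans hω))
    (hi2.add (hi3.div_const (I * x))) hlim
  rw [integral_add hi2 (hi3.div_const (I * x)), integral_div, zero_sub] at hibp
  have h2 : ‖G ε * Complex.exp (I * ε * x) / (I * x)‖ ≤ C * |x| ^ (s - 1) := by
    rw [norm_div, norm_mul, hnexp, mul_one, hnIx, ← hpow2, mul_div_assoc']
    gcongr
    exact hG ε hε0
  have h3 : ‖(∫ ω in Set.Ioi ε, deriv G ω * Complex.exp (I * ω * x)) / (I * x)‖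
      ≤ C * (1 / s) * |x| ^ (s - 1) := by
    rw [norm_div, hnIx, ← hpow2, mul_div_assoc']
    gcongr
    refine (norm_integral_le_of_norm_le (hCε (-s - 1) (by linarith))
      ((ae_restrict_mem measurableSet_Ioi).mono hbd)).trans_eq ?_
    rw [integral_const_mul, integral_Ioi_rpow_of_lt (by linarith) hε0, sub_add_cancel]
    field_simp
  have h4 : ‖∫ ω in Set.Ioi ε, G ω * Complex.exp (I * ω * x)‖
      ≤ C * |x| ^ (s - 1) + C * (1 / s) * |x| ^ (s - 1) := by
    rw [eq_sub_of_add_eq hibp]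
    refine (norm_sub_le _ _).trans (add_le_add ?_ h3)
    rwa [norm_neg]
  rw [← Set.Ioc_union_Ioi_eq_Ioi hε0.le, setIntegral_union (Set.Ioc_disjoint_Ioi le_rfl)
    measurableSet_Ioi (hint.mono_set Set.Ioc_subset_Ioi_self) hi2]
  refine (norm_add_le _ _).trans ((add_le_add h1 h4).trans_eq ?_)
  ring

/-- The half-line estimate for the amplitude `u(ω) / (d ω^γ)`, when `u` and `u'` are
bounded by `M ω^k` and `M ω^{k-1}`; it behaves like `ω^{-s}` with `s = Re γ - k`. -/
lemma norm_integral_Ioi_div_cpow_le {u u' : ℝ → ℂ} {γ d : ℂ} {k : ℕ} {M x : ℝ}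
    (hk0 : (k : ℝ) < γ.re) (hk1 : γ.re < k + 1) (hd : d ≠ 0) (hx : x ≠ 0)
    (hu : ∀ ω, 0 < ω → HasDerivAt u (u' ω) ω)
    (hM : ∀ ω, 0 < ω → ‖u ω‖ ≤ M * ω ^ k)
    (hM' : ∀ ω, 0 < ω → ‖u' ω‖ ≤ M * ω ^ ((k : ℝ) - 1))
    (hint : IntegrableOn (fun ω : ℝ => u ω / (d * (ω : ℂ) ^ γ) * Complex.exp (I * ω * x))
      (Set.Ioi 0)) :
    ‖∫ ω in Set.Ioi (0 : ℝ), u ω / (d * (ω : ℂ) ^ γ) * Complex.exp (I * ω * x)‖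
      ≤ M / ‖d‖ * (1 + ‖γ‖) * (1 / (1 - (γ.re - k)) + 1 + 1 / (γ.re - k))
        * |x| ^ (γ.re - k - 1) := by
  have hM0 : 0 ≤ M := by
    have := (norm_nonneg _).trans (hM 1 one_pos)
    simpa using this
  have hγ : -γ ≠ 0 := by
    intro h
    have : γ.re = 0 := by simp [neg_eq_zero.1 h]
    have : (0 : ℝ) ≤ k := k.cast_nonneg
    linarith
  have hdn : 0 < ‖d‖ := norm_pos_iff.2 hd
  have heq : ∀ ω : ℝ, u ω / (d * (ω : ℂ) ^ γ) = u ω * (ω : ℂ) ^ (-γ) / d := by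
    intro ω
    rw [cpow_neg]
    simp only [div_eq_mul_inv, mul_inv]
    ring
  have hder : ∀ ω, 0 < ω → HasDerivAt (fun ω : ℝ => u ω / (d * (ω : ℂ) ^ γ))
      ((u' ω * (ω : ℂ) ^ (-γ) + u ω * (-γ * (ω : ℂ) ^ (-γ - 1))) / d) ω := by
    intro ω hω
    rw [funext heq]
    exact ((hu ω hω).mul (hasDerivAt_ofReal_cpow_const hω.ne' hγ)).div_const d
  refine norm_integral_Ioi_mul_exp_le (by linarith) (by linarith) hx
    (fun ω hω => (hder ω hω).differentiableAt) (fun ω hω => ?_) (fun ω hω => ?_) hint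
  · rw [heq, norm_div, norm_mul, norm_cpow_eq_rpow_re_of_pos hω, neg_re]
    have e : ω ^ (-(γ.re - k)) = ω ^ k * ω ^ (-γ.re) := by
      rw [← Real.rpow_natCast, ← Real.rpow_add hω]; congr 1; ring
    rw [e]
    calc ‖u ω‖ * ω ^ (-γ.re) / ‖d‖ ≤ (M * ω ^ k) * ω ^ (-γ.re) / ‖d‖ := by
          gcongr; exact hM ω hω
      _ = M / ‖d‖ * 1 * (ω ^ k * ω ^ (-γ.re)) := by ring
      _ ≤ _ := by gcongr; linarith [norm_nonneg γ]
  · rw [(hder ω hω).deriv, norm_div]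
    have e1 : ω ^ (-(γ.re - k) - 1) = ω ^ ((k : ℝ) - 1) * ω ^ (-γ.re) := by
      rw [← Real.rpow_add hω]; congr 1; ring
    have e2 : ω ^ (-(γ.re - k) - 1) = ω ^ k * ω ^ (-γ.re - 1) := by
      rw [← Real.rpow_natCast, ← Real.rpow_add hω]; congr 1; ring
    have b1 : ‖u' ω * (ω : ℂ) ^ (-γ)‖ ≤ M * ω ^ (-(γ.re - k) - 1) := by
      rw [e1, norm_mul, norm_cpow_eq_rpow_re_of_pos hω, neg_re, ← mul_assoc]
      gcongr
      exact hM' ω hω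
    have b2 : ‖u ω * (-γ * (ω : ℂ) ^ (-γ - 1))‖ ≤ M * ‖γ‖ * ω ^ (-(γ.re - k) - 1) := by
      rw [e2, norm_mul, norm_mul, norm_neg, norm_cpow_eq_rpow_re_of_pos hω, sub_re, neg_re, one_re]
      calc _ ≤ (M * ω ^ k) * (‖γ‖ * ω ^ (-γ.re - 1)) := by gcongr; exact hM ω hω
        _ = _ := by ring
    calc _ ≤ (M * ω ^ (-(γ.re - k) - 1) + M * ‖γ‖ * ω ^ (-(γ.re - k) - 1)) / ‖d‖ := by
          gcongr; exact (norm_add_le _ _).trans (add_le_add b1 b2)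
      _ = _ := by ring

/-- decay estimate `|(I_{a,b}^{(γ;k)*} φ)(x)| ≤ c/|x|^{k+1-Re γ}` for `|x| ≥ 1`. -/
theorem statement9 (a b γ : ℂ) (ha : a ≠ 0) (hb : b ≠ 0) (hγ : 0 < γ.re)
    (hγ' : ∀ n : ℕ, γ.re ≠ (n : ℝ)) (k : ℕ) (hk : (k : ℤ) = ⌊γ.re⌋) (hk1 : 1 ≤ k)
    (φ : SchwartzMap ℝ ℂ) :
    ∃ c : ℝ, 0 < c ∧ ∀ x : ℝ, 1 ≤ |x| →
      ‖Istar a b γ k ⇑φ x‖ ≤ c / |x| ^ ((k : ℝ) + 1 - γ.re) := by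
  obtain ⟨h1, h2⟩ := Int.floor_eq_iff.1 hk.symm
  have hkl : (k : ℝ) < γ.re := lt_of_le_of_ne (by exact_mod_cast h1) (hγ' k).symm
  have hku : γ.re < (k : ℝ) + 1 := by exact_mod_cast h2
  obtain ⟨ψ, hψ⟩ := exists_schwartz_eq_FT φ
  have hsm : ContDiff ℝ (⊤ : ℕ∞) (FT φ) := hψ ▸ ψ.smooth ⊤
  obtain ⟨m, rfl⟩ : ∃ m, k = m + 1 := ⟨k - 1, by omega⟩
  set k := m + 1 with hkm
  have hsm' : ContDiff ℝ (⊤ : ℕ∞) (deriv (FT φ)) :=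
    (contDiff_infty_iff_deriv.1 hsm).2
  set M : ℝ := SchwartzMap.seminorm ℂ 0 k ψ with hMdef
  have hM0 : 0 ≤ M := apply_nonneg _ _
  have hM : ∀ ω, ‖iteratedDeriv k (FT φ) ω‖ ≤ M := fun ω => by
    simpa [hψ] using SchwartzMap.le_seminorm' ℂ 0 k ψ ω
  have hR : ∀ ω, ‖taylorRem (FT φ) k ω‖ ≤ M * |ω| ^ k := norm_taylorRem_le k hsm hM
  have hR' : ∀ ω, ‖taylorRem (deriv (FT φ)) m ω‖ ≤ M * |ω| ^ m :=
    norm_taylorRem_le m hsm' (by simpa [hkm, iteratedDeriv_succ'] using hM)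
  have hRd := hasDerivAt_taylorRem (hsm.differentiable (by simp)) m
  have hkm' : (k : ℝ) - 1 = (m : ℕ) := by rw [hkm]; push_cast; ring
  set A : ℝ := (1 + ‖γ‖) * (1 / (1 - (γ.re - k)) + 1 + 1 / (γ.re - k)) with hA
  have hA0 : 0 ≤ A := by
    have : 0 < 1 - (γ.re - k) := by linarith
    have : 0 < γ.re - k := by linarith
    positivity
  refine ⟨M / ‖b‖ * A + M / ‖a‖ * A + 1, by positivity, fun x hx => ?_⟩
  have hx0 : x ≠ 0 := by rintro rfl; norm_num at hx
  have hxp : 0 < |x| := abs_pos.2 hx0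
  set f : ℝ → ℂ := fun ω => taylorRem (FT φ) k ω / hab a b γ (-ω) * Complex.exp (I * ω * x)
    with hf
  have hIstar : Istar a b γ k φ x = (1 / (2 * (Real.pi : ℂ))) * ∫ ω, f ω := rfl
  have hpi : ‖(1 / (2 * (Real.pi : ℂ)))‖ ≤ 1 := by
    simp only [norm_div, norm_one, norm_mul, norm_ofNat, norm_real, Real.norm_eq_abs,
      abs_of_pos Real.pi_pos]
    rw [div_le_one (by positivity)]
    linarith [Real.pi_gt_three]
  suffices h : ‖∫ ω, f ω‖ ≤ (M / ‖b‖ * A + M / ‖a‖ * A) * |x| ^ (γ.re - k - 1) by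
    have e : |x| ^ (γ.re - k - 1) = 1 / |x| ^ ((k : ℝ) + 1 - γ.re) := by
      rw [one_div, ← Real.rpow_neg hxp.le]; congr 1; ring
    rw [hIstar, norm_mul]
    calc _ ≤ 1 * ((M / ‖b‖ * A + M / ‖a‖ * A) * |x| ^ (γ.re - k - 1)) := by gcongr
      _ ≤ (M / ‖b‖ * A + M / ‖a‖ * A + 1) * |x| ^ (γ.re - k - 1) := by
          rw [one_mul]; gcongr ?_ * _; linarith
      _ = _ := by rw [e, mul_one_div]
  by_cases hfi : Integrable f
  swap
  · -- the Bochner integral of a non-integrable function is `0`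
    rw [integral_undef hfi, norm_zero]
    positivity
  have hp : ∀ ω ∈ Set.Ioi (0 : ℝ), f ω =
      taylorRem (FT φ) k ω / (b * (ω : ℂ) ^ γ) * Complex.exp (I * ω * x) := by
    intro ω hω
    have hω : 0 < ω := hω
    have h1 : ¬ 0 < -ω := by linarith
    simp only [hf, hab, h1, if_false, neg_lt_zero.2 hω, if_true, neg_neg]
  have hn : ∀ ω ∈ Set.Ioi (0 : ℝ), f (-ω) =
      taylorRem (FT φ) k (-ω) / (a * (ω : ℂ) ^ γ) * Complex.exp (I * ω * (-x : ℝ)) := by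
    intro ω hω
    have hω : 0 < ω := hω
    simp only [hf, hab, neg_neg, hω, if_true]
    congr 2
    push_cast; ring
  have hpos := norm_integral_Ioi_div_cpow_le (u := taylorRem (FT φ) k)
    (u' := taylorRem (deriv (FT φ)) m) (M := M) hkl hku hb hx0 (fun ω _ => hRd ω)
    (fun ω hω => by simpa [abs_of_pos hω] using hR ω)
    (fun ω hω => by
      rw [hkm', Real.rpow_natCast]
      simpa [abs_of_pos hω] using hR' ω)
    (hfi.integrableOn.congr_fun hp measurableSet_Ioi)
  have hneg := norm_integral_Ioi_div_cpow_le (u := fun ω => taylorRem (FT φ) k (-ω))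
    (u' := fun ω => -taylorRem (deriv (FT φ)) m (-ω)) (M := M) hkl hku ha (neg_ne_zero.2 hx0)
    (fun ω _ => ((hRd (-ω)).scomp ω (hasDerivAt_neg ω)).congr_deriv (by simp))
    (fun ω hω => by simpa [abs_of_pos hω] using hR (-ω))
    (fun ω hω => by
      rw [hkm', Real.rpow_natCast]
      simpa [abs_of_pos hω] using hR' (-ω))
    (hfi.comp_neg.integrableOn.congr_fun hn measurableSet_Ioi)
  rw [← setIntegral_congr_fun measurableSet_Ioi hp] at hpos
  rw [← setIntegral_congr_fun measurableSet_Ioi hn, integral_comp_neg_Ioi, neg_zero, abs_neg] at hneg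
  rw [← intervalIntegral.integral_Iic_add_Ioi (b := 0) hfi.integrableOn hfi.integrableOn]
  refine (norm_add_le _ _).trans ((add_le_add hneg hpos).trans_eq ?_)
  rw [hA]
  ring
end
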